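/- For every element h ∈ G, the conjugate subgroup h(Π ∩ G_c)h⁻¹ is contained in Π. In particular, h(Π ∩ G_c)h⁻¹ = Π ∩ G_c for every h ∈ G_c. -/

import Mathlib

/-!
Two finite quotients of the lattice `G` detect `Π`: an action of `G` on the 28 points of the
Hermitian unital, whose image is `U₃(3)`, and the character `χ : G → ℤ/3` with
`χ(u) = χ(b) = 1` and `χ(v) = 0`. In the unital action `Π` becomes the affine group
`x ↦ 2 ^ s * x + c` modulo `7`, of order `21`, and `χ` is trivial on `Π`. Conversely, every element
that acts affinely and lies in `ker χ` belongs to `Π`: coset enumeration writes any `g ∈ G` as one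
of 864 explicit words times an element of `Π`, and among these words only the trivial one acts
affinely and lies in `ker χ`.

The group `G_c` fixes a point of the unital that is moved by every nontrivial affine map. So an
element of `Π ∩ G_c` acts trivially on the unital and lies in `ker χ`, and so do its conjugates,
which therefore belong to `Π`.
-/
/-- Generators of the Cartwright–Steger lattice presentation. -/
inductive CSgen : Type
  | u : CSgen
  | v : CSgen
  | b : CSgen

open FreeGroup in
/-- Relators of the Cartwright–Steger lattice:
`u³ = v⁴ = b³ = 1`, `(uv)² = (vu)²`, `vb = bv`, `(buv)³ = 1`, `(buvu)²v = 1`. -/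
def csRels : Set (FreeGroup CSgen) :=
  { (of CSgen.u) ^ 3,
    (of CSgen.v) ^ 4,
    (of CSgen.b) ^ 3,
    (of CSgen.u * of CSgen.v) ^ 2 * ((of CSgen.v * of CSgen.u) ^ 2)⁻¹,
    of CSgen.v * of CSgen.b * (of CSgen.b * of CSgen.v)⁻¹,
    (of CSgen.b * of CSgen.u * of CSgen.v) ^ 3,
    (of CSgen.b * of CSgen.u * of CSgen.v * of CSgen.u) ^ 2 * of CSgen.v }

/-- The Cartwright–Steger lattice, as an abstract presented group. -/
abbrev CS : Type := PresentedGroup csRels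

def gu : CS := PresentedGroup.of CSgen.u
def gv : CS := PresentedGroup.of CSgen.v
def gb : CS := PresentedGroup.of CSgen.b
/-- `j = (uv)²`. -/
def gj : CS := (gu * gv) ^ 2

/-- `a₁ = vuv⁻¹j⁴buvj²`. -/
def a1 : CS := gv * gu * gv⁻¹ * gj ^ 4 * gb * gu * gv * gj ^ 2
/-- `a₂ = v²ubuv⁻¹uv²j`. -/
def a2 : CS := gv ^ 2 * gu * gb * gu * gv⁻¹ * gu * gv ^ 2 * gj
/-- `a₃ = u⁻¹v²uj⁹bv⁻¹uv⁻¹j⁸`. -/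
def a3 : CS := gu⁻¹ * gv ^ 2 * gu * gj ^ 9 * gb * gv⁻¹ * gu * gv⁻¹ * gj ^ 8

/-- The subgroup `Π` generated by `a₁`, `a₂`, `a₃`. -/
def PiGrp : Subgroup CS := Subgroup.closure {a1, a2, a3}

lemma a1_mem : a1 ∈ PiGrp := Subgroup.subset_closure (Set.mem_insert _ _)
lemma a2_mem : a2 ∈ PiGrp :=
  Subgroup.subset_closure (Set.mem_insert_of_mem _ (Set.mem_insert _ _))
lemma a3_mem : a3 ∈ PiGrp :=
  Subgroup.subset_closure (Set.mem_insert_of_mem _ (Set.mem_insert_of_mem _ (Set.mem_singleton _)))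

/-- The subgroup `G_c` generated by `(bu⁻¹)²`, `j⁻¹(bu⁻¹)²`, `j` and `u`
(the stabilizer of the mirror `M_c`). -/
def Gc : Subgroup CS := Subgroup.closure {(gb * gu⁻¹) ^ 2, gj⁻¹ * (gb * gu⁻¹) ^ 2, gj, gu}

lemma Gc_mem_t2 : (gb * gu⁻¹) ^ 2 ∈ Gc := Subgroup.subset_closure (Set.mem_insert _ _)
lemma Gc_mem_t4 : gj⁻¹ * (gb * gu⁻¹) ^ 2 ∈ Gc :=
  Subgroup.subset_closure (Set.mem_insert_of_mem _ (Set.mem_insert _ _))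
lemma Gc_mem_j : gj ∈ Gc :=
  Subgroup.subset_closure
    (Set.mem_insert_of_mem _ (Set.mem_insert_of_mem _ (Set.mem_insert _ _)))
lemma Gc_mem_u : gu ∈ Gc :=
  Subgroup.subset_closure
    (Set.mem_insert_of_mem _ (Set.mem_insert_of_mem _
      (Set.mem_insert_of_mem _ (Set.mem_singleton _))))

namespace CartwrightSteger

/-! ### The group generated by `u` and `v` -/

section Octahedral

variable {G : Type*} [Group G] {u v j : G}

/-- The relations between the generators `u` and `v` of the Cartwright–Steger lattice, with
`j = (uv)²`. They define a central extension by `⟨j⟩` of the rotation group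
`⟨u, v | u³ = v⁴ = (uv)² = 1⟩` of the cube. -/
structure OctahedralPair (u v j : G) : Prop where
  pow_u : u ^ 3 = 1
  pow_v : v ^ 4 = 1
  sq_u_mul_v : (u * v) ^ 2 = j
  sq_v_mul_u : (v * u) ^ 2 = j

namespace OctahedralPair

lemma inv_u (h : OctahedralPair u v j) : u⁻¹ = u ^ 2 :=
  inv_eq_of_mul_eq_one_left (by rw [← pow_succ, h.pow_u])

lemma inv_v (h : OctahedralPair u v j) : v⁻¹ = v ^ 3 :=
  inv_eq_of_mul_eq_one_left (by rw [← pow_succ, h.pow_v])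

lemma commute_u (h : OctahedralPair u v j) : Commute u j :=
  calc u * j = (u * v) ^ 2 * u := by rw [← h.sq_v_mul_u, mul_pow_mul]
    _ = j * u := by rw [h.sq_u_mul_v]

lemma commute_v (h : OctahedralPair u v j) : Commute v j :=
  calc v * j = (v * u) ^ 2 * v := by rw [← h.sq_u_mul_v, mul_pow_mul]
    _ = j * v := by rw [h.sq_v_mul_u]

lemma u_mul_v (h : OctahedralPair u v j) : u * v = v⁻¹ * (u⁻¹ * j) := by
  rw [← h.sq_u_mul_v, pow_two, ← mul_assoc, ← mul_inv_rev, inv_mul_cancel_left]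

lemma v_mul_u (h : OctahedralPair u v j) : v * u = u⁻¹ * (v⁻¹ * j) := by
  rw [← h.sq_v_mul_u, pow_two, ← mul_assoc, ← mul_inv_rev, inv_mul_cancel_left]

lemma u_mul_v_mul_u (h : OctahedralPair u v j) : u * (v * u) = v⁻¹ * j := by
  rw [h.v_mul_u, mul_inv_cancel_left]

lemma sq_u (h : OctahedralPair u v j) : u * u = v * u * (v * j⁻¹) := by
  rw [mul_assoc, ← mul_assoc u v, h.u_mul_v, h.inv_u, mul_assoc, mul_assoc, mul_inv_cancel,
    mul_one, mul_inv_cancel_left, pow_two]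

lemma u_mul_sq_v_mul_u (h : OctahedralPair u v j) :
    u * (v ^ 2 * u) = v ^ 3 * u * (v⁻¹ * j ^ 2) :=
  calc u * (v ^ 2 * u) = u * v * (v * u) := by simp only [pow_two, mul_assoc]
    _ = v⁻¹ * (u⁻¹ * u⁻¹) * (v⁻¹ * j ^ 2) := by
      simp only [h.u_mul_v, h.v_mul_u, pow_two, mul_assoc, h.commute_u.symm.inv_right.left_comm,
        h.commute_v.symm.inv_right.left_comm]
    _ = v ^ 3 * u * (v⁻¹ * j ^ 2) := by
      rw [← h.inv_v, ← mul_inv_rev, ← pow_two, ← h.inv_u, inv_inv]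

lemma u_mul_bottom (h : OctahedralPair u v j) :
    u * (u * v ^ 3 * u) = v ^ 2 * u * (v * (j ^ 2)⁻¹) :=
  calc u * (u * v ^ 3 * u) = u⁻¹ * v⁻¹ * u := by
        rw [h.inv_u, h.inv_v, pow_two]; simp only [mul_assoc]
    _ = v * u * j⁻¹ * u := by rw [h.v_mul_u, ← mul_assoc, mul_inv_cancel_right]
    _ = v * (u * u) * j⁻¹ := by
      rw [mul_assoc _ j⁻¹, h.commute_u.symm.inv_left.eq]; simp only [mul_assoc]
    _ = v ^ 2 * u * (v * (j ^ 2)⁻¹) := by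
      rw [h.sq_u, ← inv_pow, pow_two, pow_two]; simp only [mul_assoc]

lemma v_mul_bottom (h : OctahedralPair u v j) :
    v * (u * v ^ 3 * u) = u * v ^ 3 * u * (v⁻¹ * j ^ 3) :=
  calc v * (u * v ^ 3 * u) = v * u * v⁻¹ * (u * v) * v⁻¹ := by
        rw [← h.inv_v]; simp only [mul_assoc, mul_inv_cancel, mul_one]
    _ = u⁻¹ * v⁻¹ ^ 3 * u⁻¹ * v⁻¹ * j ^ 2 := by
      rw [h.u_mul_v, h.v_mul_u]
      simp only [pow_succ, pow_zero, one_mul, mul_assoc, h.commute_u.symm.inv_right.left_comm,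
        h.commute_v.symm.inv_right.left_comm, h.commute_v.symm.inv_right.eq]
    _ = u * (u * (v * u)) * u * v⁻¹ * j ^ 2 := by
      rw [inv_pow, ← h.inv_v, inv_inv, h.inv_u, pow_two]; simp only [mul_assoc]
    _ = u * v ^ 3 * u * (v⁻¹ * j ^ 3) := by
      rw [h.u_mul_v_mul_u, ← h.inv_v]
      simp only [pow_succ, pow_zero, one_mul, mul_assoc, h.commute_u.symm.left_comm,
        h.commute_v.symm.inv_right.left_comm]

lemma pow_j (h : OctahedralPair u v j) : j ^ 12 = 1 := by
  have hconj : (u * v ^ 3 * u)⁻¹ * v * (u * v ^ 3 * u)⁻¹⁻¹ = v⁻¹ * j ^ 3 := by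
    rw [inv_inv, mul_assoc, h.v_mul_bottom, inv_mul_cancel_left]
  calc j ^ 12 = (v⁻¹ * j ^ 3) ^ 4 := by
        rw [(h.commute_v.inv_left.pow_right 3).mul_pow, inv_pow, h.pow_v, inv_one, one_mul,
          ← pow_mul]
    _ = 1 := by rw [← hconj, conj_pow, h.pow_v, mul_one, mul_inv_cancel]

end OctahedralPair

end Octahedral

/-- The faces of the cube on which the octahedral group `⟨u, v⟩ / ⟨j⟩` acts; `v` is the quarter
turn fixing the top face. -/
inductive Face
  | top | front | right | back | left | bottom
  deriving DecidableEq

namespace Face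

instance : Fintype Face := ⟨{top, front, right, back, left, bottom}, by rintro ⟨⟩ <;> decide⟩

variable {G : Type*} [Group G] {u v j : G}

/-- A representative of the coset of `⟨v, j⟩` in `⟨u, v⟩` that takes the top face to `i`. -/
def rep (u v : G) : Face → G
  | top => 1
  | front => u
  | right => v * u
  | back => v ^ 2 * u
  | left => v ^ 3 * u
  | bottom => u * v ^ 3 * u

/-- Left multiplication by `u` on representatives: `uTurn i = (i', m, a)` means
`u * rep i = rep i' * v ^ m * j ^ a`. -/
def uTurn : Face → Face × Fin 4 × Fin 12
  | top => (front, 0, 0)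
  | front => (right, 1, 11)
  | right => (top, 3, 1)
  | back => (left, 3, 2)
  | left => (bottom, 0, 0)
  | bottom => (back, 1, 10)

/-- Left multiplication by `v` on representatives, encoded as in `uTurn`. -/
def vTurn : Face → Face × Fin 4 × Fin 12
  | top => (top, 1, 0)
  | front => (right, 0, 0)
  | right => (back, 0, 0)
  | back => (left, 0, 0)
  | left => (front, 0, 0)
  | bottom => (bottom, 3, 3)

lemma u_mul_rep (h : OctahedralPair u v j) (i : Face) :
    u * i.rep u v = (uTurn i).1.rep u v * (v ^ (uTurn i).2.1.val * j ^ (uTurn i).2.2.val) := by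
  have inv_j : j⁻¹ = j ^ 11 := inv_eq_of_mul_eq_one_left (by rw [← pow_succ, h.pow_j])
  have inv_sq_j : (j ^ 2)⁻¹ = j ^ 10 := inv_eq_of_mul_eq_one_left (by rw [← pow_add, h.pow_j])
  cases i
  case top => simp [rep, uTurn]
  case front => simpa [rep, uTurn, inv_j] using h.sq_u
  case right => simpa [rep, uTurn, h.inv_v] using h.u_mul_v_mul_u
  case back => simpa [rep, uTurn, h.inv_v] using h.u_mul_sq_v_mul_u
  case left => simp [rep, uTurn, mul_assoc]
  case bottom => simpa [rep, uTurn, inv_sq_j] using h.u_mul_bottom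

lemma v_mul_rep (h : OctahedralPair u v j) (i : Face) :
    v * i.rep u v = (vTurn i).1.rep u v * (v ^ (vTurn i).2.1.val * j ^ (vTurn i).2.2.val) := by
  cases i
  case top => simp [rep, vTurn]
  case front => simp [rep, vTurn]
  case right => simp [rep, vTurn, pow_two, mul_assoc]
  case back => simp [rep, vTurn, pow_succ, mul_assoc]
  case left => simp [rep, vTurn, ← mul_assoc, ← pow_succ', h.pow_v]
  case bottom => simpa [rep, vTurn, h.inv_v] using h.v_mul_bottom

lemma commute_rep (h : OctahedralPair u v j) (i : Face) : Commute (i.rep u v) j := by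
  cases i
  case top => exact .one_left j
  case front => exact h.commute_u
  case right => exact h.commute_v.mul_left h.commute_u
  case back => exact (h.commute_v.pow_left 2).mul_left h.commute_u
  case left => exact (h.commute_v.pow_left 3).mul_left h.commute_u
  case bottom => exact (h.commute_u.mul_left (h.commute_v.pow_left 3)).mul_left h.commute_u

end Face

/-! ### Coordinates -/

open Face

lemma pow_val_add {M : Type*} [Monoid M] {x : M} {n : ℕ} (hx : x ^ n = 1) (k l : Fin n) :
    x ^ (k + l).val = x ^ k.val * x ^ l.val := by
  rw [Fin.val_add, ← pow_add, ← pow_eq_pow_mod _ hx]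

/-- Coordinates on the candidates `rep face * v ^ vExp * j ^ jExp * b ^ bExp` for coset
representatives of `Π` in the Cartwright–Steger lattice. -/
structure Coord where
  face : Face
  vExp : Fin 4
  jExp : Fin 12
  bExp : Fin 3
  deriving DecidableEq

namespace Coord

instance : Fintype Coord :=
  .ofEquiv (Face × Fin 4 × Fin 12 × Fin 3)
    { toFun := fun (i, m, a, μ) => ⟨i, m, a, μ⟩
      invFun := fun p => (p.face, p.vExp, p.jExp, p.bExp) }

/-- The element with given coordinates, for `u`, `v`, `b` in any group. -/
def eval {G : Type*} [Group G] (u v b : G) (p : Coord) : G :=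
  p.face.rep u v * v ^ p.vExp.val * ((u * v) ^ 2) ^ p.jExp.val * b ^ p.bExp.val

/-- The operation on coordinates induced by an operation on face representatives, the latter
encoded as in `Face.uTurn`. -/
def turn (t : Face → Face × Fin 4 × Fin 12) (p : Coord) : Coord :=
  ⟨(t p.face).1, p.vExp + (t p.face).2.1, p.jExp + (t p.face).2.2, p.bExp⟩

/-- Left multiplication by `u` in coordinates. -/
def uMul : Coord → Coord := turn uTurn

/-- Left multiplication by `v` in coordinates. -/
def vMul : Coord → Coord := turn vTurn

/-- Left multiplication by `j ^ k` in coordinates. -/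
def jMul (k : Fin 12) : Coord → Coord := turn fun i => (i, 0, k)

section

variable {G H : Type*} [Group G] [Group H] {u v j x : G}

lemma map_eval (f : G →* H) (u v b : G) (p : Coord) :
    f (p.eval u v b) = p.eval (f u) (f v) (f b) := by
  rcases p with ⟨_ | _ | _ | _ | _ | _, m, a, μ⟩ <;> simp [eval, rep]

lemma eval_turn (h : OctahedralPair u v j) {t : Face → Face × Fin 4 × Fin 12}
    (ht : ∀ i, x * i.rep u v = (t i).1.rep u v * (v ^ (t i).2.1.val * j ^ (t i).2.2.val))
    (b : G) (p : Coord) : (p.turn t).eval u v b = x * p.eval u v b := by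
  have exponents : v ^ p.vExp.val * v ^ (t p.face).2.1.val *
        (j ^ p.jExp.val * j ^ (t p.face).2.2.val) =
      v ^ (t p.face).2.1.val * j ^ (t p.face).2.2.val * (v ^ p.vExp.val * j ^ p.jExp.val) := by
    rw [(Commute.pow_pow_self v _ _).eq, (Commute.pow_pow_self j _ _).eq,
      (h.commute_v.pow_pow _ _).mul_mul_mul_comm]
  simp only [eval, turn, h.sq_u_mul_v, pow_val_add h.pow_v, pow_val_add h.pow_j]
  rw [mul_assoc _ _ (j ^ _ * _), exponents, ← mul_assoc, ← ht]
  simp only [mul_assoc]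

lemma eval_uMul (h : OctahedralPair u v j) (b : G) (p : Coord) :
    (uMul p).eval u v b = u * p.eval u v b :=
  eval_turn h (u_mul_rep h) b p

lemma eval_vMul (h : OctahedralPair u v j) (b : G) (p : Coord) :
    (vMul p).eval u v b = v * p.eval u v b :=
  eval_turn h (v_mul_rep h) b p

lemma eval_jMul (h : OctahedralPair u v j) (k : Fin 12) (b : G) (p : Coord) :
    (jMul k p).eval u v b = j ^ k.val * p.eval u v b := by
  refine eval_turn h (fun i => ?_) b p
  simpa using ((commute_rep h i).symm.pow_left k.val).eq

end
end Coord

lemma octahedralPair_gens : OctahedralPair gu gv gj where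
  pow_u := PresentedGroup.one_of_mem (rels := csRels) (by simp [csRels])
  pow_v := PresentedGroup.one_of_mem (rels := csRels) (by simp [csRels])
  sq_u_mul_v := rfl
  sq_v_mul_u :=
    (mul_inv_eq_one.1 (PresentedGroup.one_of_mem (rels := csRels) (by simp [csRels]))).symm

lemma commute_gv_gb : Commute gv gb :=
  mul_inv_eq_one.1 (PresentedGroup.one_of_mem (rels := csRels) (by simp [csRels]))

lemma pow_gb : gb ^ 3 = 1 := PresentedGroup.one_of_mem (rels := csRels) (by simp [csRels])

lemma pow_gb_mul_gu_mul_gv : (gb * gu * gv) ^ 3 = 1 :=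
  PresentedGroup.one_of_mem (rels := csRels) (by simp [csRels])

lemma gb_mul_gj_mul_gb : gb * gj * gb = gj⁻¹ * gv := by
  have h := octahedralPair_gens
  have relator : (gb * gu * gv * gu) ^ 2 * gv = 1 :=
    PresentedGroup.one_of_mem (rels := csRels) (by simp [csRels])
  have buvu : gb * gu * gv * gu = gv⁻¹ * (gb * gj) := by
    rw [mul_assoc, mul_assoc, h.u_mul_v_mul_u, commute_gv_gb.inv_left.symm.left_comm]
  have commute_v : Commute gv (gb * gj) := commute_gv_gb.mul_right h.commute_v
  have sq_gb_mul_gj : (gb * gj) ^ 2 = gv := by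
    rwa [buvu, commute_v.inv_left.mul_pow, mul_assoc, (commute_v.pow_right 2).symm.eq, inv_pow,
      pow_two gv, mul_inv_rev, mul_assoc, inv_mul_cancel_left, inv_mul_eq_one, eq_comm] at relator
  calc gb * gj * gb = (gb * gj) ^ 2 * gj⁻¹ := by
        rw [pow_two, ← mul_assoc (gb * gj), mul_inv_cancel_right]
    _ = gj⁻¹ * gv := by rw [sq_gb_mul_gj, h.commute_v.inv_right.eq]

/-! ### Coset enumeration -/

section Edges

open Coord

variable {X : Type*} [MulAction CS X] {x₀ : X}

/-- The translate of a base point by the element with coordinates `p`. -/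
def point (x₀ : X) (p : Coord) : X := p.eval gu gv gb • x₀

/-- The action of `b` takes the point with coordinates `e.1` to the one with coordinates `e.2`. -/
def IsEdge (x₀ : X) (e : Coord × Coord) : Prop := gb • point x₀ e.1 = point x₀ e.2

lemma point_uMul (p : Coord) : point x₀ (uMul p) = gu • point x₀ p := by
  rw [point, eval_uMul octahedralPair_gens, mul_smul, point]

lemma point_vMul (p : Coord) : point x₀ (vMul p) = gv • point x₀ p := by
  rw [point, eval_vMul octahedralPair_gens, mul_smul, point]

lemma point_jMul (k : Fin 12) (p : Coord) : point x₀ (jMul k p) = gj ^ k.val • point x₀ p := by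
  rw [point, eval_jMul octahedralPair_gens, mul_smul, point]

lemma point_uMul_iterate (n : ℕ) (p : Coord) : point x₀ (uMul^[n] p) = gu ^ n • point x₀ p := by
  induction n with
  | zero => simp
  | succ n ih => rw [Function.iterate_succ_apply', point_uMul, ih, pow_succ', mul_smul]

lemma point_vMul_iterate (n : ℕ) (p : Coord) : point x₀ (vMul^[n] p) = gv ^ n • point x₀ p := by
  induction n with
  | zero => simp
  | succ n ih => rw [Function.iterate_succ_apply', point_vMul, ih, pow_succ', mul_smul]

namespace IsEdge

variable {p q r : Coord}

lemma vMul_iterate (h : IsEdge x₀ (p, q)) (n : ℕ) :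
    IsEdge x₀ (Coord.vMul^[n] p, Coord.vMul^[n] q) := by
  simp only [IsEdge, point_vMul_iterate] at h ⊢
  rw [← h, smul_smul, smul_smul, (commute_gv_gb.pow_left n).eq]

lemma jMul (h : IsEdge x₀ (p, q)) : IsEdge x₀ (Coord.jMul 1 q, vMul (Coord.jMul 11 p)) := by
  have pow_gj : gj ^ 11 = gj⁻¹ :=
    eq_inv_of_mul_eq_one_left (by rw [← pow_succ, octahedralPair_gens.pow_j])
  simp only [IsEdge, point_vMul, point_jMul] at h ⊢
  rw [← h, smul_smul, smul_smul, smul_smul]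
  congr 1
  simp [pow_gj, gb_mul_gj_mul_gb, octahedralPair_gens.commute_v.inv_right.eq]

lemma cycle (hpq : IsEdge x₀ (p, q)) (hqr : IsEdge x₀ (q, r)) : IsEdge x₀ (r, p) := by
  simp only [IsEdge] at *
  rw [← hqr, ← hpq, smul_smul, smul_smul, ← pow_three', pow_gb, one_smul]

lemma braid (hpq : IsEdge x₀ (p, q)) (hqr : IsEdge x₀ (uMul (vMul q), r)) :
    IsEdge x₀ (uMul (vMul r), Coord.vMul^[3] (uMul^[2] p)) := by
  have h := octahedralPair_gens
  simp only [IsEdge, point_uMul, point_vMul, point_uMul_iterate, point_vMul_iterate] at *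
  have relation : gb * (gu * (gv * (gb * (gu * (gv * gb))))) = gv⁻¹ * gu⁻¹ := by
    rw [← mul_inv_rev, eq_inv_iff_mul_eq_one]
    simpa only [pow_three, mul_assoc] using pow_gb_mul_gu_mul_gv
  rw [← hqr, ← hpq, ← h.inv_u, ← h.inv_v]
  simp only [smul_smul, relation]

end IsEdge

namespace Face

/-- A number `n ≤ 4` such that `v ^ n` takes `rep i * v ^ m` to a fixed representative of its
orbit under left multiplication by `v`, up to powers of `j`. -/
def vSteps : Face → Fin 4 → ℕ
  | top, m => 4 - m.val
  | front, _ => 0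
  | right, _ => 3
  | back, _ => 2
  | left, _ => 1
  | bottom, m => m.val

lemma vSteps_le_four (i : Face) (m : Fin 4) : i.vSteps m ≤ 4 := by
  cases i <;> simp only [vSteps] <;> omega

/-- The position of a face in the mixed-radix numbering `Coord.code`. -/
def toNat : Face → ℕ
  | top => 0
  | front => 1
  | right => 2
  | back => 3
  | left => 4
  | bottom => 5

lemma toNat_injective : Function.Injective toNat := by decide

end Face

/-- The mixed-radix number of a coordinate vector, used as key for search trees. -/
def Coord.code (p : Coord) : ℕ :=
  ((p.face.toNat * 4 + p.vExp.val) * 12 + p.jExp.val) * 3 + p.bExp.val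

lemma Coord.code_injective : Function.Injective code := by
  rintro ⟨i, m, a, μ⟩ ⟨i', m', a', μ'⟩ h
  simp only [code] at h
  have hi : i = i' := Face.toNat_injective (by omega)
  subst hi
  simp only [mk.injEq, Fin.ext_iff, true_and]
  omega

instance : Std.LawfulEqCmp (compareOn Coord.code) where
  eq_of_compare h := Coord.code_injective (Std.LawfulEqCmp.eq_of_compare (cmp := compare) h)

/-- Partial tables of the action of `b` on the points `point x₀ p`. Since `b` commutes with `v`,
only one entry for each orbit of `v` is stored. -/
abbrev Table : Type := Std.TreeMap Coord Coord (compareOn Coord.code)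

namespace Table

/-- The image of `p` under `b` according to the table. -/
def lookup (E : Table) (p : Coord) : Option Coord :=
  E[vMul^[p.face.vSteps p.vExp] p]?.map vMul^[4 - p.face.vSteps p.vExp]

/-- Record the edge `e`. -/
def record (E : Table) (e : Coord × Coord) : Table :=
  E.insert (vMul^[e.1.face.vSteps e.1.vExp] e.1) (vMul^[e.1.face.vSteps e.1.vExp] e.2)

/-- The edges obtained from the edge `e` by `IsEdge.jMul`, `IsEdge.cycle` and `IsEdge.braid`,
where the last two use the table as a source of second edges. -/
def deduce (E : Table) (e : Coord × Coord) : List (Coord × Coord) :=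
  (jMul 1 e.2, vMul (jMul 11 e.1)) :: (E.lookup e.2).toList.map (·, e.1) ++
    (List.range 4).flatMap fun k =>
      (E.lookup (uMul (vMul (vMul^[k] e.2)))).toList.map fun r =>
        (uMul (vMul r), vMul^[3] (uMul^[2] (vMul^[k] e.1)))

/-- Close the table under deductions, starting from the list of edges in the second argument and
making as many steps as the first argument says. When the list is exhausted, all recorded edges are
examined again, as second edges that were missing before may be known by now. -/
def explore : ℕ → List (Coord × Coord) → Table → Table
  | 0, _, E => E
  | n + 1, [], E => explore n (E.toList.flatMap E.deduce) E
  | n + 1, e :: Q, E =>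
    match E.lookup e.1 with
    | some _ => explore n Q E
    | none => explore n (E.deduce e ++ Q) (E.record e)

/-- All entries of the table are edges. -/
def Sound (x₀ : X) (E : Table) : Prop := ∀ p q, E[p]? = some q → IsEdge x₀ (p, q)

lemma sound_empty : Sound x₀ ∅ := by simp [Sound]

lemma Sound.lookup {E : Table} (hE : Sound x₀ E) {p q : Coord} (h : E.lookup p = some q) :
    IsEdge x₀ (p, q) := by
  obtain ⟨q', hq', rfl⟩ := Option.map_eq_some_iff.1 h
  have full_turn : point x₀ (vMul^[4 - p.face.vSteps p.vExp] (vMul^[p.face.vSteps p.vExp] p)) =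
      point x₀ p := by
    rw [point_vMul_iterate, point_vMul_iterate, smul_smul, ← pow_add,
      Nat.sub_add_cancel (p.face.vSteps_le_four p.vExp), octahedralPair_gens.pow_v, one_smul]
  have := (hE _ _ hq').vMul_iterate (4 - p.face.vSteps p.vExp)
  simpa only [IsEdge, full_turn] using this

lemma Sound.record {E : Table} (hE : Sound x₀ E) {e : Coord × Coord} (he : IsEdge x₀ e) :
    Sound x₀ (E.record e) := by
  intro p q h
  rw [Table.record, Std.TreeMap.getElem?_insert] at h
  split_ifs at h with hkey
  · obtain rfl := Std.LawfulEqCmp.eq_of_compare hkey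
    obtain rfl := Option.some.inj h
    exact he.vMul_iterate _
  · exact hE p q h

lemma Sound.deduce {E : Table} (hE : Sound x₀ E) {e : Coord × Coord} (he : IsEdge x₀ e) :
    ∀ e' ∈ E.deduce e, IsEdge x₀ e' := by
  intro e' he'
  simp only [Table.deduce, List.cons_append, List.mem_cons, List.mem_append, List.mem_map,
    List.mem_flatMap, Option.mem_toList] at he'
  obtain rfl | ⟨r, hr, rfl⟩ | ⟨k, -, r, hr, rfl⟩ := he'
  · exact he.jMul
  · exact he.cycle (hE.lookup hr)
  · exact (he.vMul_iterate k).braid (hE.lookup hr)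

lemma Sound.explore {n : ℕ} {Q : List (Coord × Coord)} {E : Table} (hE : Sound x₀ E)
    (hQ : ∀ e ∈ Q, IsEdge x₀ e) : Sound x₀ (explore n Q E) := by
  induction n generalizing Q E with
  | zero => exact hE
  | succ n ih =>
    cases Q with
    | nil =>
      refine ih hE fun e he => ?_
      obtain ⟨e', he', hdeduce⟩ := List.mem_flatMap.1 he
      exact hE.deduce (hE _ _ (Std.TreeMap.mem_toList_iff_getElem?_eq_some.1 he')) e hdeduce
    | cons e Q =>
      rw [List.forall_mem_cons] at hQ
      rw [Table.explore]
      split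
      · exact ih hE hQ.2
      · refine ih (hE.record hQ.1) fun e' he' => ?_
        exact (List.mem_append.1 he').elim (hE.deduce hQ.1 e') (hQ.2 e')

end Table

/-- Three edges expressing `b³ = 1` at the base point, and one edge for each of the generators
`a₁`, `a₂`, `a₃` of `Π`. -/
def initialEdges : List (Coord × Coord) :=
  let base : Coord := ⟨top, 0, 0, 0⟩
  [(base, ⟨top, 0, 0, 1⟩), (⟨top, 0, 0, 1⟩, ⟨top, 0, 0, 2⟩), (⟨top, 0, 0, 2⟩, base),
    (uMul (vMul (jMul 2 base)), jMul 8 (vMul (uMul^[2] (vMul^[3] base)))),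
    (uMul (vMul^[3] (uMul (vMul^[2] (jMul 1 base)))), uMul^[2] (vMul^[2] base)),
    (vMul^[3] (uMul (vMul^[3] (jMul 8 base))), jMul 3 (uMul^[2] (vMul^[2] (uMul base))))]

lemma smul_smul_eq_inv_smul {G Y : Type*} [Group G] [MulAction G Y] {g h k : G} {y : Y}
    (hy : (g * h * k) • y = y) : h • k • y = g⁻¹ • y := by
  rw [eq_inv_smul_iff, smul_smul, smul_smul, hy]

lemma isEdge_of_mem_initialEdges (h₁ : a1 • x₀ = x₀) (h₂ : a2 • x₀ = x₀) (h₃ : a3 • x₀ = x₀) :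
    ∀ e ∈ initialEdges, IsEdge x₀ e := by
  have h := octahedralPair_gens
  have inv_pow_gj (k l : ℕ) (hkl : k + l = 12) : (gj ^ k)⁻¹ = gj ^ l :=
    inv_eq_of_mul_eq_one_right (by rw [← pow_add, hkl, h.pow_j])
  have inv_sq_gv : (gv ^ 2)⁻¹ = gv ^ 2 :=
    inv_eq_of_mul_eq_one_right (by rw [← pow_add, h.pow_v])
  have point_top (k : Fin 3) : point x₀ ⟨top, 0, 0, k⟩ = gb ^ k.val • x₀ := by
    simp [point, eval, rep]
  have edge₁ : gb • (gu * gv * gj ^ 2) • x₀ = (gv * gu * gv⁻¹ * gj ^ 4)⁻¹ • x₀ :=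
    smul_smul_eq_inv_smul (by simpa only [a1, mul_assoc] using h₁)
  have edge₂ : gb • (gu * gv⁻¹ * gu * gv ^ 2 * gj) • x₀ = (gv ^ 2 * gu)⁻¹ • x₀ :=
    smul_smul_eq_inv_smul (by simpa only [a2, mul_assoc] using h₂)
  have edge₃ : gb • (gv⁻¹ * gu * gv⁻¹ * gj ^ 8) • x₀ = (gu⁻¹ * gv ^ 2 * gu * gj ^ 9)⁻¹ • x₀ :=
    smul_smul_eq_inv_smul (by simpa only [a3, mul_assoc] using h₃)
  simp only [initialEdges, List.forall_mem_cons, List.not_mem_nil, false_imp_iff, implies_true,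
    and_true, IsEdge, point_uMul, point_vMul, point_jMul, point_uMul_iterate, point_vMul_iterate,
    point_top]
  refine ⟨?_, ?_, ?_, ?_, ?_, ?_⟩
  · simp
  · simp [smul_smul, pow_two]
  · simp [smul_smul, ← pow_succ', pow_gb]
  · simpa [mul_smul, inv_pow_gj 4 8, ← h.inv_u, ← h.inv_v] using edge₁
  · simpa [mul_smul, inv_sq_gv, ← h.inv_u, ← h.inv_v] using edge₂
  · simpa [mul_smul, inv_pow_gj 9 3, inv_sq_gv, ← h.inv_u, ← h.inv_v] using edge₃

/-- The action of `b` on the coset space of `Π`, as found by coset enumeration. -/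
def cosetTable : Table := Table.explore 1000 initialEdges ∅

set_option maxRecDepth 100000 in
lemma isSome_lookup_cosetTable (p : Coord) : (cosetTable.lookup p).isSome := by
  revert p; decide +kernel

lemma exists_gb_smul_point (h₁ : a1 • x₀ = x₀) (h₂ : a2 • x₀ = x₀) (h₃ : a3 • x₀ = x₀)
    (p : Coord) : ∃ q, gb • point x₀ p = point x₀ q := by
  have sound : cosetTable.Sound x₀ :=
    Table.sound_empty.explore (isEdge_of_mem_initialEdges h₁ h₂ h₃)
  obtain ⟨q, hq⟩ := Option.isSome_iff_exists.1 (isSome_lookup_cosetTable p)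
  exact ⟨q, sound.lookup hq⟩

open MulAction Pointwise in
lemma exists_smul_eq_point (h₁ : a1 • x₀ = x₀) (h₂ : a2 • x₀ = x₀) (h₃ : a3 • x₀ = x₀)
    (g : CS) : ∃ p, g • x₀ = point x₀ p := by
  have mem_stabilizer {s : CS} (hs : ∀ p, ∃ q, s • point x₀ p = point x₀ q) :
      s ∈ stabilizer CS (Set.range (point x₀)) := by
    rw [mem_stabilizer_set_iff_smul_set_subset (Set.finite_range _)]
    rintro _ ⟨_, ⟨p, rfl⟩, rfl⟩
    obtain ⟨q, hq⟩ := hs p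
    exact ⟨q, hq.symm⟩
  have stabilizer_eq_top : stabilizer CS (Set.range (point x₀)) = ⊤ := by
    rw [eq_top_iff, ← PresentedGroup.closure_range_of csRels, Subgroup.closure_le]
    rintro _ ⟨s, rfl⟩
    cases s
    case u => exact mem_stabilizer fun p => ⟨uMul p, (point_uMul p).symm⟩
    case v => exact mem_stabilizer fun p => ⟨vMul p, (point_vMul p).symm⟩
    case b => exact mem_stabilizer (exists_gb_smul_point h₁ h₂ h₃)
  have base_mem : x₀ ∈ Set.range (point x₀) := ⟨⟨top, 0, 0, 0⟩, by simp [point, eval, rep]⟩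
  have hg : g ∈ stabilizer CS (Set.range (point x₀)) := stabilizer_eq_top ▸ Subgroup.mem_top g
  obtain ⟨p, hp⟩ := (mem_stabilizer_set.1 hg x₀).2 base_mem
  exact ⟨p, hp.symm⟩

end Edges

lemma exists_eval_mul (g : CS) : ∃ p : Coord, ∃ π ∈ PiGrp, g = p.eval gu gv gb * π := by
  have fixed {a : CS} (ha : a ∈ PiGrp) : a • ((1 : CS) : CS ⧸ PiGrp) = (1 : CS) := by
    simpa [QuotientGroup.eq] using ha
  obtain ⟨p, hp⟩ := exists_smul_eq_point (fixed a1_mem) (fixed a2_mem) (fixed a3_mem) g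
  refine ⟨p, (p.eval gu gv gb)⁻¹ * g, ?_, by simp⟩
  simpa [point, QuotientGroup.eq] using hp.symm

/-! ### The action on the unital -/

/-- Labels for the 28 points of the Hermitian unital over the field with nine elements, chosen such
that `a₁`, `a₂` and `a₃` act by `(x, t) ↦ (2 * x, t + 1)`, `(x + 1, t)` and `(x - 1, t)`. -/
abbrev UnitalPoint : Type := ZMod 7 × Option (ZMod 3)

/-- The action of the generator `u` on the labels of the unital, as a table. -/
def uMap : UnitalPoint → UnitalPoint
  | (x, none) =>
    ![(6, some 0), (1, some 0), (5, some 0), (2, some 2), (5, some 1),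
      (0, none), (1, none)] x
  | (x, some 0) =>
    ![(0, some 0), (6, none), (4, none), (3, some 2), (6, some 1),
      (3, some 1), (5, none)] x
  | (x, some 1) =>
    ![(1, some 1), (5, some 2), (3, some 0), (2, none), (6, some 2),
      (2, some 0), (0, some 2)] x
  | (x, some 2) =>
    ![(4, some 0), (3, none), (1, some 2), (2, some 1), (4, some 1),
      (0, some 1), (4, some 2)] x

/-- The action of the generator `v` on the labels of the unital, as a table. -/
def vMap : UnitalPoint → UnitalPoint
  | (x, none) =>
    ![(0, none), (4, some 0), (2, none), (6, none), (5, none),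
      (1, some 2), (3, some 1)] x
  | (x, some 0) =>
    ![(4, some 2), (1, some 0), (2, some 0), (0, some 1), (2, some 1),
      (5, some 1), (1, none)] x
  | (x, some 1) =>
    ![(0, some 2), (3, none), (6, some 0), (1, some 1), (0, some 0),
      (3, some 2), (5, some 0)] x
  | (x, some 2) =>
    ![(2, some 2), (5, some 2), (3, some 0), (6, some 1), (6, some 2),
      (4, none), (4, some 1)] x

/-- The action of the generator `b` on the labels of the unital, as a table. -/
def bMap : UnitalPoint → UnitalPoint
  | (x, none) =>
    ![(2, some 0), (6, none), (0, none), (4, some 1), (2, some 2),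
      (3, some 0), (0, some 0)] x
  | (x, some 0) =>
    ![(1, none), (1, some 0), (2, none), (6, some 1), (3, some 1),
      (1, some 2), (3, none)] x
  | (x, some 1) =>
    ![(5, some 0), (6, some 2), (1, some 1), (4, some 2), (6, some 0),
      (5, some 2), (5, none)] x
  | (x, some 2) =>
    ![(5, some 1), (0, some 1), (3, some 2), (4, none), (4, some 0),
      (0, some 2), (2, some 1)] x

/-- The action of the generator `u` on the unital. -/
def uPerm : Equiv.Perm UnitalPoint := ⟨uMap, uMap^[2], by decide +kernel, by decide +kernel⟩

/-- The action of the generator `v` on the unital. -/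
def vPerm : Equiv.Perm UnitalPoint := ⟨vMap, vMap^[3], by decide +kernel, by decide +kernel⟩

/-- The action of the generator `b` on the unital. -/
def bPerm : Equiv.Perm UnitalPoint := ⟨bMap, bMap^[2], by decide +kernel, by decide +kernel⟩

/-- The action of the Cartwright–Steger lattice on the unital, through its quotient `U₃(3)`. -/
def unitalRep : CS →* Equiv.Perm UnitalPoint :=
  PresentedGroup.toGroup (f := fun | .u => uPerm | .v => vPerm | .b => bPerm) <| by
    simp only [csRels, Set.forall_mem_insert, Set.mem_singleton_iff, forall_eq, map_mul, map_pow,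
      map_inv, FreeGroup.lift_apply_of]
    refine ⟨?_, ?_, ?_, ?_, ?_, ?_, ?_⟩ <;> decide +kernel

lemma unitalRep_gu : unitalRep gu = uPerm := PresentedGroup.toGroup.of _
lemma unitalRep_gv : unitalRep gv = vPerm := PresentedGroup.toGroup.of _
lemma unitalRep_gb : unitalRep gb = bPerm := PresentedGroup.toGroup.of _

/-- The character of order three of the Cartwright–Steger lattice that is trivial on `Π`. -/
def cubicChar : CS →* Multiplicative (ZMod 3) :=
  PresentedGroup.toGroup (f := fun | .u => .ofAdd 1 | .v => 1 | .b => .ofAdd 1) <| by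
    simp only [csRels, Set.forall_mem_insert, Set.mem_singleton_iff, forall_eq, map_mul, map_pow,
      map_inv, FreeGroup.lift_apply_of]
    decide

lemma cubicChar_gu : cubicChar gu = .ofAdd 1 := PresentedGroup.toGroup.of _
lemma cubicChar_gv : cubicChar gv = 1 := PresentedGroup.toGroup.of _
lemma cubicChar_gb : cubicChar gb = .ofAdd 1 := PresentedGroup.toGroup.of _

/-- The homomorphism `s ↦ 2 ^ s` from `ZMod 3` to the units modulo `7`. -/
def twoPow : ZMod 3 → ZMod 7 := ![1, 2, 4]

lemma twoPow_add (s t : ZMod 3) : twoPow (s + t) = twoPow s * twoPow t := by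
  revert s t; decide

/-- The affine map `x ↦ 2 ^ s * x + c` modulo `7`, paired with translation by `s` of the second
label. -/
def affine (c : ZMod 7) (s : ZMod 3) : UnitalPoint → UnitalPoint :=
  fun p => (twoPow s * p.1 + c, p.2.map (· + s))

lemma affine_affine (c d : ZMod 7) (s t : ZMod 3) (p : UnitalPoint) :
    affine c s (affine d t p) = affine (twoPow s * d + c) (s + t) p := by
  simp only [affine, twoPow_add, Option.map_map, Prod.mk.injEq]
  refine ⟨by ring, ?_⟩
  congr 1
  funext y
  simp only [Function.comp_apply]
  ring

lemma affine_zero_zero (p : UnitalPoint) : affine 0 0 p = p := by simp [affine, twoPow]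

/-- The permutations of the unital that act by affine maps; they form the normalizer of a Sylow
`7`-subgroup of `U₃(3)`. -/
def affineGroup : Subgroup (Equiv.Perm UnitalPoint) where
  carrier := {σ | ∃ c s, ∀ p, σ p = affine c s p}
  one_mem' := ⟨0, 0, fun p => (affine_zero_zero p).symm⟩
  mul_mem' := by
    rintro σ τ ⟨c, s, hσ⟩ ⟨d, t, hτ⟩
    exact ⟨_, _, fun p => by rw [Equiv.Perm.mul_apply, hσ, hτ, affine_affine]⟩
  inv_mem' := by
    rintro σ ⟨c, s, hσ⟩
    refine ⟨-(twoPow (-s) * c), -s, fun p => ?_⟩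
    have twoPow_mul_neg : twoPow s * twoPow (-s) = 1 := by
      rw [← twoPow_add, add_neg_cancel]; rfl
    rw [Equiv.Perm.inv_eq_iff_eq, hσ, affine_affine, add_neg_cancel, mul_neg, ← mul_assoc,
      twoPow_mul_neg, one_mul, neg_add_cancel, affine_zero_zero]

instance (σ : Equiv.Perm UnitalPoint) : Decidable (σ ∈ affineGroup) :=
  inferInstanceAs (Decidable (∃ c s, ∀ p, σ p = affine c s p))

lemma eq_one_of_mem_affineGroup {σ : Equiv.Perm UnitalPoint} (hσ : σ ∈ affineGroup)
    (fixed : σ (0, some 0) = (0, some 0)) : σ = 1 := by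
  obtain ⟨c, s, h⟩ := hσ
  obtain ⟨rfl, rfl⟩ : c = 0 ∧ s = 0 := by simpa [h, affine] using fixed
  exact Equiv.ext fun p => by rw [h, affine_zero_zero, Equiv.Perm.one_apply]

lemma PiGrp_le_comap_affineGroup : PiGrp ≤ affineGroup.comap unitalRep := by
  simp only [PiGrp, Subgroup.closure_le, Set.insert_subset_iff, Set.singleton_subset_iff,
    SetLike.mem_coe, Subgroup.mem_comap, a1, a2, a3, gj, map_mul, map_pow, map_inv, unitalRep_gu,
    unitalRep_gv, unitalRep_gb]
  refine ⟨⟨0, 1, ?_⟩, ⟨1, 0, ?_⟩, ⟨-1, 0, ?_⟩⟩ <;> decide +kernel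

lemma PiGrp_le_ker_cubicChar : PiGrp ≤ cubicChar.ker := by
  simp only [PiGrp, Subgroup.closure_le, Set.insert_subset_iff, Set.singleton_subset_iff,
    SetLike.mem_coe, MonoidHom.mem_ker, a1, a2, a3, gj, map_mul, map_pow, map_inv, cubicChar_gu,
    cubicChar_gv, cubicChar_gb]
  decide

lemma unitalRep_apply_of_mem_Gc {g : CS} (hg : g ∈ Gc) :
    unitalRep g (0, some 0) = (0, some 0) := by
  suffices Gc ≤ (MulAction.stabilizer _ ((0, some 0) : UnitalPoint)).comap unitalRep from this hg
  simp only [Gc, Subgroup.closure_le, Set.insert_subset_iff, Set.singleton_subset_iff,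
    SetLike.mem_coe, Subgroup.mem_comap, MulAction.mem_stabilizer_iff, Equiv.Perm.smul_def, gj,
    map_mul, map_pow, map_inv, unitalRep_gu, unitalRep_gv, unitalRep_gb]
  decide +kernel

lemma Coord.eq_base_of_eval_mem : ∀ p : Coord,
    p.eval (.ofAdd 1) 1 (.ofAdd 1) = (1 : Multiplicative (ZMod 3)) →
      p.eval uPerm vPerm bPerm ∈ affineGroup → p = ⟨top, 0, 0, 0⟩ := by
  decide +kernel

lemma mem_PiGrp_iff {g : CS} : g ∈ PiGrp ↔ unitalRep g ∈ affineGroup ∧ cubicChar g = 1 := by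
  refine ⟨fun hg => ⟨PiGrp_le_comap_affineGroup hg, PiGrp_le_ker_cubicChar hg⟩, ?_⟩
  rintro ⟨hρ, hχ⟩
  obtain ⟨p, π, hπ, rfl⟩ := exists_eval_mul g
  have hρπ : unitalRep π ∈ affineGroup := PiGrp_le_comap_affineGroup hπ
  have hχπ : cubicChar π = 1 := PiGrp_le_ker_cubicChar hπ
  rw [map_mul, Subgroup.mul_mem_cancel_right _ hρπ, Coord.map_eval, unitalRep_gu, unitalRep_gv,
    unitalRep_gb] at hρ
  rw [map_mul, hχπ, mul_one, Coord.map_eval, cubicChar_gu, cubicChar_gv, cubicChar_gb] at hχ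
  obtain rfl := p.eq_base_of_eval_mem hχ hρ
  simpa [Coord.eval, rep] using hπ

lemma conj_mem_PiGrp (h : CS) {g : CS} (hg : g ∈ PiGrp ⊓ Gc) : h * g * h⁻¹ ∈ PiGrp := by
  obtain ⟨hρ, hχ⟩ := mem_PiGrp_iff.1 hg.1
  have hρ' : unitalRep g = 1 := eq_one_of_mem_affineGroup hρ (unitalRep_apply_of_mem_Gc hg.2)
  rw [mem_PiGrp_iff]
  simp [hρ', hχ, one_mem]

end CartwrightSteger

/-- for every `h ∈ G`, `h(Π ∩ G_c)h⁻¹ ⊆ Π`; in particular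
`h(Π ∩ G_c)h⁻¹ = Π ∩ G_c` for every `h ∈ G_c`. -/
theorem stmt_16 :
    (∀ h : CS, Subgroup.map (MulAut.conj h).toMonoidHom (PiGrp ⊓ Gc) ≤ PiGrp) ∧
    (∀ h ∈ Gc, Subgroup.map (MulAut.conj h).toMonoidHom (PiGrp ⊓ Gc) = PiGrp ⊓ Gc) := by
  have conj_mem_inf {h : CS} (hh : h ∈ Gc) {g : CS} (hg : g ∈ PiGrp ⊓ Gc) :
      h * g * h⁻¹ ∈ PiGrp ⊓ Gc :=
    ⟨CartwrightSteger.conj_mem_PiGrp h hg, Gc.mul_mem (Gc.mul_mem hh hg.2) (Gc.inv_mem hh)⟩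
  refine ⟨?_, fun h hh => le_antisymm ?_ fun g hg => ?_⟩
  · rintro h _ ⟨g, hg, rfl⟩
    exact CartwrightSteger.conj_mem_PiGrp h hg
  · rintro _ ⟨g, hg, rfl⟩
    exact conj_mem_inf hh hg
  · exact ⟨h⁻¹ * g * h, by simpa using conj_mem_inf (Gc.inv_mem hh) hg, by simp [mul_assoc]⟩
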